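/- Let N = 1, s ∈ (0,∞), p ∈ (2,∞), and κ ∈ (0,1). Then the supremum M = sup{ Q_κ(u) : u ∈ H^s(ℝ) \ {0} } is finite if and only if 1/(2s) ≤ (1-κ)p/(p-2) ≤ 1/2. -/

import Mathlib

open MeasureTheory Filter Topology SchwartzMap

noncomputable section

abbrev Esp (N : ℕ) := EuclideanSpace ℝ (Fin N)

/-- An element of the Sobolev space `H^s(ℝ^N, ℂ)`: an `L²` function `u` together with (a
representative of) its distributional Fourier transform `hat`, satisfying
`(1+|ξ|²)^{s/2}·hat ∈ L²`. The relation between `u` and `hat` is expressed by duality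
against Schwartz functions (the multiplication formula `∫ u · 𝓕φ = ∫ û · φ`). -/
structure Hs (N : ℕ) (s : ℝ) where
  u : Esp N → ℂ
  hat : Esp N → ℂ
  u_mem : MemLp u 2 (volume : Measure (Esp N))
  hat_mem : MemLp (fun ξ => (((1 + ‖ξ‖ ^ 2) ^ (s / 2) : ℝ) : ℂ) * hat ξ) 2
    (volume : Measure (Esp N))
  fourier_spec : ∀ φ : SchwartzMap (Esp N) ℂ,
    ∫ x, u x * (FourierTransform.fourierCLE ℂ (SchwartzMap (Esp N) ℂ) φ) x = ∫ ξ, hat ξ * φ ξ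

/-- `u` does not vanish almost everywhere. -/
def Hs.Nontriv {N : ℕ} {s : ℝ} (U : Hs N s) : Prop :=
  ¬ (U.u =ᵐ[(volume : Measure (Esp N))] 0)

/-- `‖(|D|^s - 1) u‖_{L²}`: by Plancherel this is the `L²` norm of `(|ξ|^s - 1)·û`. -/
def dNorm {N : ℕ} {s : ℝ} (U : Hs N s) : ENNReal :=
  eLpNorm (fun ξ => ((‖ξ‖ ^ s - 1 : ℝ) : ℂ) * U.hat ξ) 2 (volume : Measure (Esp N))

/-- The quotient `Q_κ(u) = ‖u‖_{L^p} / (‖u‖_{L²}^κ ‖(|D|^s - 1)u‖_{L²}^{1-κ})`,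
computed in `[0,∞]`. -/
def Qquot {N : ℕ} {s : ℝ} (p κ : ℝ) (U : Hs N s) : ENNReal :=
  eLpNorm U.u (ENNReal.ofReal p) (volume : Measure (Esp N)) /
    (eLpNorm U.u 2 (volume : Measure (Esp N)) ^ κ * dNorm U ^ (1 - κ))

/-!
By Plancherel, both norms in the denominator of `Q_κ` are `L²` norms of `û`, with weights `1` and
`||ξ|^s - 1|`. The second weight vanishes to first order on the unit sphere and grows like `|ξ|^s`
at infinity.

If `û` is the indicator function of a ball of radius `r` in dimension `N`, then
`‖u‖_p / ‖u‖_2` is at least of order `r^{N(1/2-1/p)}`. Distant balls with `r → ∞` make `Q_κ`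
unbounded if `s(1-κ) < N(1/2-1/p)`, and balls centered on the unit sphere with `r → 0` do so if
`1-κ > N(1/2-1/p)`.

Conversely, for `N = 1`, let `1/(2σ) = (1-κ)p/(p-2)`, so that `1 ≤ σ ≤ s`. Then `||ξ|^s - 1|`
dominates `dist(ξ, {1, -1})^σ`, and a Carlson-type inequality bounds `‖u‖_∞ ≤ ‖û‖_1` by a multiple
of `‖u‖_2^{1-1/(2σ)} ‖(|D|^s - 1)u‖_2^{1/(2σ)}`. Interpolating `L^p` between `L²` and `L^∞` gives
the bound on `Q_κ`.
-/

open FourierTransform Module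

section Fourier

variable {E : Type*} [NormedAddCommGroup E] [InnerProductSpace ℝ E] [FiniteDimensional ℝ E]
  [MeasurableSpace E] [BorelSpace E]

theorem ae_eq_of_forall_integral_mul_schwartzMap_eq {f g : E → ℂ}
    (hf : LocallyIntegrable f) (hg : LocallyIntegrable g)
    (h : ∀ φ : 𝓢(E, ℂ), ∫ x, f x * φ x = ∫ x, g x * φ x) : f =ᵐ[volume] g := by
  refine ae_eq_of_integral_contDiff_smul_eq hf hg fun k k_smooth k_compact => ?_
  have hk_compact : HasCompactSupport (Complex.ofRealCLM ∘ k) := k_compact.comp_left rfl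
  have hk_smooth : ContDiff ℝ (⊤ : ℕ∞) (Complex.ofRealCLM ∘ k) := by fun_prop
  simpa [mul_comm] using h (hk_compact.toSchwartzMap hk_smooth)

theorem integral_Lp_mul_fourier_eq (f : Lp (α := E) ℂ 2) (φ : 𝓢(E, ℂ)) :
    ∫ x, f x * (𝓕 φ) x = ∫ ξ, (𝓕 f : Lp (α := E) ℂ 2) ξ * φ ξ := by
  have h := congrArg (fun T => T φ) (Lp.fourier_toTemperedDistribution_eq f)
  simp only [TemperedDistribution.fourier_apply, Lp.toTemperedDistribution_apply] at h
  simpa [mul_comm] using h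

theorem integral_fourierInv_mul_schwartzMap_eq {h : E → ℂ} (hh : Integrable h) (φ : 𝓢(E, ℂ)) :
    ∫ x, (𝓕⁻ h) x * φ x = ∫ ξ, h ξ * (𝓕⁻ φ) ξ := by
  have h_flip := VectorFourier.integral_bilin_fourierIntegral_eq_flip
    (ContinuousLinearMap.mul ℂ ℂ) (L := -innerₗ E) (μ := volume) (ν := volume)
    Real.continuous_fourierChar (by simpa using! continuous_inner.neg) hh φ.integrable
  have h_symm : (-innerₗ E).flip = -innerₗ E := by
    ext x y
    simp [real_inner_comm]
  rw [h_symm] at h_flip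
  rw [SchwartzMap.fourierInv_coe]
  simpa using! h_flip

theorem continuous_fourierInv_of_integrable {h : E → ℂ} (hh : Integrable h) :
    Continuous (𝓕⁻ h) :=
  VectorFourier.fourierIntegral_continuous Real.continuous_fourierChar
    (by simpa using! continuous_inner.neg) hh

theorem eLpNorm_top_fourierInv_le (h : E → ℂ) :
    eLpNorm (𝓕⁻ h) ⊤ volume ≤ eLpNorm h 1 volume := by
  refine eLpNormEssSup_le_of_ae_enorm_bound (Eventually.of_forall fun x => ?_)
  rw [Real.fourierInv_eq, eLpNorm_one_eq_lintegral_enorm]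
  refine (enorm_integral_le_lintegral_enorm _).trans_eq (lintegral_congr fun v => ?_)
  rw [← ofReal_norm, ← ofReal_norm, Circle.norm_smul]

theorem one_half_le_re_fourierChar {t : ℝ} (ht : |t| ≤ 1 / 6) :
    1 / 2 ≤ (Real.fourierChar t : ℂ).re := by
  have h_angle : |2 * Real.pi * t| ≤ Real.pi / 3 := by
    rw [abs_mul, abs_of_pos Real.two_pi_pos]
    nlinarith [Real.pi_pos]
  rw [Real.fourierChar_apply, Complex.exp_ofReal_mul_I_re, ← Real.cos_abs,
    ← Real.cos_pi_div_three]
  exact Real.cos_le_cos_of_nonneg_of_le_pi (abs_nonneg _) (by linarith [Real.pi_pos]) h_angle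

-- After factoring out the phase at `a`, all phases on `S` lie within `π / 3` of `0`.
theorem half_measureReal_le_norm_fourierInv_indicator {S : Set E} (hS : MeasurableSet S)
    (hS_fin : volume S ≠ ⊤) {a x : E} (hx : ∀ v ∈ S, |inner ℝ (v - a) x| ≤ 1 / 6) :
    volume.real S / 2 ≤ ‖(𝓕⁻ (S.indicator fun _ => (1 : ℂ))) x‖ := by
  let phase : E → ℂ := fun v => Real.fourierChar (inner ℝ (v - a) x)
  have h_factor : (𝓕⁻ (S.indicator fun _ => (1 : ℂ))) x =
      Real.fourierChar (inner ℝ a x) * ∫ v in S, phase v := by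
    rw [Real.fourierInv_eq, ← integral_const_mul, ← integral_indicator hS]
    refine integral_congr_ae (Eventually.of_forall fun v => ?_)
    by_cases hv : v ∈ S
    · simp [hv, phase, Circle.smul_def, ← Circle.coe_mul, ← AddChar.map_add_eq_mul,
        ← inner_add_left]
    · simp [hv]
  have h_cont : Continuous phase := by
    have := Real.continuous_fourierChar
    fun_prop
  have h_int : IntegrableOn phase S :=
    (integrableOn_const (C := (1 : ℝ)) hS_fin).mono' h_cont.aestronglyMeasurable
      (Eventually.of_forall fun v => (Circle.norm_coe _).le)
  calc volume.real S / 2 = ∫ _ in S, (1 / 2 : ℝ) := by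
        rw [setIntegral_const, smul_eq_mul, mul_one_div]
    _ ≤ ∫ v in S, (phase v).re :=
        setIntegral_mono_on (integrableOn_const hS_fin) h_int.re hS
          fun v hv => one_half_le_re_fourierChar (hx v hv)
    _ = (∫ v in S, phase v).re := integral_re (𝕜 := ℂ) h_int
    _ ≤ ‖∫ v in S, phase v‖ := Complex.re_le_norm _
    _ = _ := by rw [h_factor, norm_mul, Circle.norm_coe, one_mul]

end Fourier

section Seminorms

variable {α F : Type*} [MeasurableSpace α] {μ : Measure α} [NormedAddCommGroup F]

theorem eLpNorm_le_eLpNorm_rpow_mul_eLpNorm_top_rpow {f : α → F} (hf : AEStronglyMeasurable f μ)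
    {q p : ℝ} (hq : 0 < q) (hqp : q ≤ p) :
    eLpNorm f (ENNReal.ofReal p) μ ≤
      eLpNorm f (ENNReal.ofReal q) μ ^ (q / p) * eLpNorm f ⊤ μ ^ (1 - q / p) := by
  have hp : 0 < p := hq.trans_le hqp
  have h_lintegral : ∫⁻ x, ‖f x‖ₑ ^ p ∂μ ≤ (∫⁻ x, ‖f x‖ₑ ^ q ∂μ) * eLpNorm f ⊤ μ ^ (p - q) := by
    rw [← lintegral_mul_const'' _ (hf.enorm.pow_const q)]
    refine lintegral_mono_ae ?_
    filter_upwards [enorm_ae_le_eLpNormEssSup f μ] with x hx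
    calc ‖f x‖ₑ ^ p = ‖f x‖ₑ ^ q * ‖f x‖ₑ ^ (p - q) := by
          rw [← ENNReal.rpow_add_of_nonneg _ _ hq.le (by linarith), add_sub_cancel]
      _ ≤ ‖f x‖ₑ ^ q * eLpNorm f ⊤ μ ^ (p - q) := by
          rw [eLpNorm_exponent_top]
          gcongr
  rw [eLpNorm_eq_lintegral_rpow_enorm_toReal (by simpa using hp) (by simp),
    eLpNorm_eq_lintegral_rpow_enorm_toReal (by simpa using hq) (by simp),
    ENNReal.toReal_ofReal hp.le, ENNReal.toReal_ofReal hq.le]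
  calc (∫⁻ x, ‖f x‖ₑ ^ p ∂μ) ^ (1 / p)
      ≤ ((∫⁻ x, ‖f x‖ₑ ^ q ∂μ) * eLpNorm f ⊤ μ ^ (p - q)) ^ (1 / p) := by gcongr
    _ = _ := by
        rw [ENNReal.mul_rpow_of_nonneg _ _ (by positivity), ← ENNReal.rpow_mul,
          ← ENNReal.rpow_mul]
        congr 2 <;> field_simp

-- Cauchy–Schwarz against the weight `1 + m / ρ`; the choice `ρ = ‖m • h‖₂ / ‖h‖₂` balances
-- its two terms.
theorem eLpNorm_one_le_of_eLpNorm_inv_one_add_div_le [NormedSpace ℝ F] {m : α → ℝ}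
    (hm : Measurable m) (hm_nonneg : ∀ x, 0 ≤ m x) {C : ENNReal} {θ : ℝ}
    (hC : ∀ ρ > 0, eLpNorm (fun x => (1 + m x / ρ)⁻¹) 2 μ ≤ C * ENNReal.ofReal ρ ^ θ)
    {h : α → F} (hh : AEStronglyMeasurable h μ)
    (hA_zero : eLpNorm h 2 μ ≠ 0) (hA_top : eLpNorm h 2 μ ≠ ⊤)
    (hB_zero : eLpNorm (m • h) 2 μ ≠ 0) (hB_top : eLpNorm (m • h) 2 μ ≠ ⊤) :
    eLpNorm h 1 μ ≤ 2 * C * (eLpNorm h 2 μ ^ (1 - θ) * eLpNorm (m • h) 2 μ ^ θ) := by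
  set A := eLpNorm h 2 μ
  set B := eLpNorm (m • h) 2 μ
  have h_ratio_top : B / A ≠ ⊤ := ENNReal.div_ne_top hB_top hA_zero
  set ρ : ℝ := (B / A).toReal
  have hρ : 0 < ρ := ENNReal.toReal_pos (ENNReal.div_ne_zero.2 ⟨hB_zero, hA_top⟩) h_ratio_top
  have hρ_ofReal : ENNReal.ofReal ρ = B / A := ENNReal.ofReal_toReal h_ratio_top
  let w : α → ℝ := fun x => 1 + m x / ρ
  have hw_pos : ∀ x, 0 < w x := fun x => by
    have := hm_nonneg x
    positivity
  have hw_meas : Measurable w := by fun_prop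
  have h_weighted : eLpNorm (w • h) 2 μ ≤ 2 * A := by
    have h_split : w • h = h + ρ⁻¹ • (m • h) := by
      ext x
      simp [w, add_smul, smul_smul, div_eq_inv_mul]
    calc eLpNorm (w • h) 2 μ ≤ A + eLpNorm (ρ⁻¹ • (m • h)) 2 μ := by
          rw [h_split]
          exact eLpNorm_add_le hh ((hm.aestronglyMeasurable.smul hh).const_smul _) (by norm_num)
      _ = A + (B / A)⁻¹ * B := by
          rw [eLpNorm_const_smul, Real.enorm_of_nonneg (by positivity),
            ENNReal.ofReal_inv_of_pos hρ, hρ_ofReal]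
      _ = 2 * A := by
          rw [ENNReal.inv_div (Or.inl hA_top) (Or.inl hA_zero),
            ENNReal.div_mul_cancel hB_zero hB_top, two_mul]
  have h_cancel : w⁻¹ • (w • h) = h := by
    ext x
    simp [smul_smul, (hw_pos x).ne']
  calc eLpNorm h 1 μ = eLpNorm (w⁻¹ • (w • h)) 1 μ := by rw [h_cancel]
    _ ≤ eLpNorm w⁻¹ 2 μ * eLpNorm (w • h) 2 μ :=
        eLpNorm_smul_le_mul_eLpNorm (hw_meas.aestronglyMeasurable.smul hh)
          hw_meas.inv.aestronglyMeasurable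
    _ ≤ (C * (B / A) ^ θ) * (2 * A) := by
        gcongr
        exact hρ_ofReal ▸ hC ρ hρ
    _ = 2 * C * (A ^ (1 - θ) * B ^ θ) := by
        rw [ENNReal.rpow_sub _ _ hA_zero hA_top, ENNReal.rpow_one, div_eq_mul_inv, div_eq_mul_inv,
          ENNReal.mul_rpow_of_ne_top hB_top (ENNReal.inv_ne_top.2 hA_zero), ENNReal.inv_rpow]
        ring

theorem memLp_indicator_of_isCompact {X : Type*} [TopologicalSpace X] [T2Space X]
    [MeasurableSpace X] [OpensMeasurableSpace X] {μ : Measure X}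
    [IsFiniteMeasureOnCompacts μ] {K : Set X} (hK : IsCompact K) {f : X → F}
    (hf : ContinuousOn f K) (p : ENNReal) : MemLp (K.indicator f) p μ := by
  have : IsFiniteMeasure (μ.restrict K) := isFiniteMeasure_restrict.2 hK.measure_lt_top.ne
  obtain ⟨C, hC⟩ := hK.exists_bound_of_continuousOn hf
  rw [memLp_indicator_iff_restrict hK.measurableSet]
  exact MemLp.of_bound (hf.aestronglyMeasurable_of_isCompact hK hK.measurableSet) C
    (ae_restrict_of_forall_mem hK.measurableSet hC)

theorem measureReal_closedBall_pos {X : Type*} [PseudoMetricSpace X] [ProperSpace X]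
    [MeasurableSpace X] (μ : Measure X) [μ.IsOpenPosMeasure] [IsFiniteMeasureOnCompacts μ]
    (a : X) {r : ℝ} (hr : 0 < r) : 0 < μ.real (Metric.closedBall a r) :=
  ENNReal.toReal_pos (Metric.measure_closedBall_pos μ a hr).ne' measure_closedBall_lt_top.ne

end Seminorms

section Weights

variable {E : Type*} [NormedAddCommGroup E] [NormedSpace ℝ E] [FiniteDimensional ℝ E]
  [MeasurableSpace E] [BorelSpace E] (μ : Measure E) [μ.IsAddHaarMeasure]

theorem memLp_two_inv_one_add_norm_rpow {σ : ℝ} (hσ : (finrank ℝ E : ℝ) < 2 * σ) :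
    MemLp (fun ξ : E => (1 + ‖ξ‖ ^ σ)⁻¹) 2 μ := by
  have hσ_pos : 0 < σ := by linarith [(finrank ℝ E).cast_nonneg (α := ℝ)]
  have h_meas : AEStronglyMeasurable (fun ξ : E => (1 + ‖ξ‖ ^ σ)⁻¹) μ :=
    (by fun_prop : Measurable _).aestronglyMeasurable
  rw [memLp_two_iff_integrable_sq h_meas]
  refine ((integrable_one_add_norm hσ).const_mul ((2 ^ σ) ^ 2)).mono' (h_meas.pow 2)
    (Eventually.of_forall fun ξ => ?_)
  have h_bracket : (1 + ‖ξ‖) ^ σ ≤ 2 ^ σ * (1 + ‖ξ‖ ^ σ) := by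
    have h_max : 1 + ‖ξ‖ ≤ 2 * max 1 ‖ξ‖ := by
      linarith [le_max_left 1 ‖ξ‖, le_max_right 1 ‖ξ‖]
    calc (1 + ‖ξ‖) ^ σ ≤ (2 * max 1 ‖ξ‖) ^ σ := by gcongr
      _ = 2 ^ σ * max 1 ‖ξ‖ ^ σ := Real.mul_rpow (by norm_num) (by positivity)
      _ ≤ 2 ^ σ * (1 + ‖ξ‖ ^ σ) := by
          gcongr
          have := Real.rpow_nonneg (norm_nonneg ξ) σ
          rcases le_total 1 ‖ξ‖ with h | h
          · rw [max_eq_right h]; linarith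
          · rw [max_eq_left h, Real.one_rpow]; linarith
  have h_inv : (1 + ‖ξ‖ ^ σ)⁻¹ ≤ 2 ^ σ * ((1 + ‖ξ‖) ^ σ)⁻¹ := by
    rw [← div_eq_mul_inv, inv_le_comm₀ (by positivity) (by positivity), inv_div,
      div_le_iff₀' (by positivity)]
    exact h_bracket
  calc ‖((1 + ‖ξ‖ ^ σ)⁻¹) ^ 2‖ = ((1 + ‖ξ‖ ^ σ)⁻¹) ^ 2 := Real.norm_of_nonneg (by positivity)
    _ ≤ (2 ^ σ * ((1 + ‖ξ‖) ^ σ)⁻¹) ^ 2 := by gcongr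
    _ = (2 ^ σ) ^ 2 * (1 + ‖ξ‖) ^ (-(2 * σ)) := by
        rw [mul_pow, Real.rpow_neg (by positivity), mul_comm 2 σ, Real.rpow_mul (by positivity),
          Real.rpow_two, inv_pow]

theorem eLpNorm_comp_smul {F : Type*} [NormedAddCommGroup F] (f : E → F) {q : ENNReal}
    (hq : q ≠ ⊤) {c : ℝ} (hc : 0 < c) :
    eLpNorm (fun ξ => f (c • ξ)) q μ =
      ENNReal.ofReal ((c ^ finrank ℝ E)⁻¹) ^ q.toReal⁻¹ * eLpNorm f q μ := by
  have h_emb : MeasurableEmbedding (fun ξ : E => c • ξ) :=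
    (Homeomorph.smulOfNeZero c hc.ne').measurableEmbedding
  have h_map := h_emb.eLpNorm_map_measure (μ := μ) (g := f) (p := q)
  rw [Measure.map_addHaar_smul μ hc.ne', eLpNorm_smul_measure_of_ne_top hq,
    abs_of_pos (by positivity)] at h_map
  simpa [Function.comp_def] using h_map.symm

theorem eLpNorm_two_inv_one_add_norm_rpow_div {σ ρ : ℝ} (hσ : 0 < σ) (hρ : 0 < ρ) :
    eLpNorm (fun ξ : E => (1 + ‖ξ‖ ^ σ / ρ)⁻¹) 2 μ =
      eLpNorm (fun ξ : E => (1 + ‖ξ‖ ^ σ)⁻¹) 2 μ *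
        ENNReal.ofReal ρ ^ (finrank ℝ E / (2 * σ)) := by
  have h_scale : (fun ξ : E => (1 + ‖ξ‖ ^ σ / ρ)⁻¹) =
      fun ξ => (1 + ‖ρ ^ (-σ⁻¹) • ξ‖ ^ σ)⁻¹ := by
    ext ξ
    rw [norm_smul, Real.norm_of_nonneg (by positivity), Real.mul_rpow (by positivity)
      (by positivity), ← Real.rpow_mul hρ.le, neg_mul, inv_mul_cancel₀ hσ.ne', Real.rpow_neg_one,
      div_eq_inv_mul]
  have h_factor : (((ρ ^ (-σ⁻¹)) ^ finrank ℝ E)⁻¹) ^ (2⁻¹ : ℝ) = ρ ^ (finrank ℝ E / (2 * σ)) := by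
    rw [← Real.rpow_natCast, ← Real.rpow_mul hρ.le, ← Real.rpow_neg hρ.le, ← Real.rpow_mul hρ.le]
    congr 1
    field_simp
  rw [h_scale, eLpNorm_comp_smul μ (fun ξ : E => (1 + ‖ξ‖ ^ σ)⁻¹) (by norm_num) (by positivity),
    mul_comm, ENNReal.toReal_ofNat, ENNReal.ofReal_rpow_of_pos (by positivity), h_factor,
    ENNReal.ofReal_rpow_of_pos hρ]

end Weights

section Symbol

variable {E : Type*} [SeminormedAddCommGroup E]

theorem continuous_one_add_norm_sq_rpow (s : ℝ) :
    Continuous fun ξ : E => (((1 + ‖ξ‖ ^ 2) ^ (s / 2) : ℝ) : ℂ) :=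
  Complex.continuous_ofReal.comp <|
    Continuous.rpow_const (by fun_prop) fun _ => Or.inl (by positivity)

theorem one_le_one_add_norm_sq_rpow {s : ℝ} (hs : 0 ≤ s) (ξ : E) :
    1 ≤ (1 + ‖ξ‖ ^ 2) ^ (s / 2) :=
  Real.one_le_rpow (by linarith [sq_nonneg ‖ξ‖]) (by positivity)

theorem abs_norm_rpow_sub_one_le {s : ℝ} (hs : 0 ≤ s) (ξ : E) :
    |‖ξ‖ ^ s - 1| ≤ (1 + ‖ξ‖ ^ 2) ^ (s / 2) := by
  have h_pow : ‖ξ‖ ^ s ≤ (1 + ‖ξ‖ ^ 2) ^ (s / 2) :=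
    calc ‖ξ‖ ^ s = (‖ξ‖ ^ 2) ^ (s / 2) := by
          rw [← Real.rpow_natCast_mul (norm_nonneg ξ)]
          congr 1
          push_cast
          ring
      _ ≤ (1 + ‖ξ‖ ^ 2) ^ (s / 2) := by gcongr; linarith
  have h_nonneg : 0 ≤ ‖ξ‖ ^ s := by positivity
  exact abs_le.2 ⟨by linarith [one_le_one_add_norm_sq_rpow hs ξ], by linarith⟩

theorem abs_norm_rpow_sub_one_mem_Icc_of_le_norm {s : ℝ} (hs : 0 < s) {r : ℝ} (hr : 2 ≤ r ^ s)
    (hr_nonneg : 0 ≤ r) {ξ : E} (h_lower : r ≤ ‖ξ‖) (h_upper : ‖ξ‖ ≤ 3 * r) :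
    |‖ξ‖ ^ s - 1| ∈ Set.Icc (1 / 2 * r ^ s) (3 ^ s * r ^ s) := by
  have h_pow_lower : r ^ s ≤ ‖ξ‖ ^ s := by gcongr
  have h_pow_upper : ‖ξ‖ ^ s ≤ 3 ^ s * r ^ s := by
    rw [← Real.mul_rpow (by norm_num) hr_nonneg]
    gcongr
  rw [abs_of_nonneg (by linarith)]
  constructor <;> linarith

theorem exists_abs_norm_rpow_sub_one_le_mul (s : ℝ) {e : E} (he : ‖e‖ = 1) :
    ∃ C > 0, ∀ᶠ r : ℝ in 𝓝[>] 0, ∀ ξ ∈ Metric.closedBall e r, |‖ξ‖ ^ s - 1| ≤ C * r := by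
  have h_deriv : HasDerivAt (fun t : ℝ => t ^ s) (s * 1 ^ (s - 1)) 1 :=
    Real.hasDerivAt_rpow_const (Or.inl one_ne_zero)
  obtain ⟨C, hC, h_bound⟩ := h_deriv.isBigO_sub.exists_pos
  obtain ⟨ε, hε, h_ball⟩ := Metric.eventually_nhds_iff.1 h_bound.bound
  refine ⟨C, hC, ?_⟩
  filter_upwards [Ioo_mem_nhdsGT hε] with r hr ξ hξ
  have h_near : |‖ξ‖ - 1| ≤ r := by
    rw [← he]
    exact (abs_norm_sub_norm_le ξ e).trans (mem_closedBall_iff_norm.1 hξ)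
  calc |‖ξ‖ ^ s - 1| ≤ C * |‖ξ‖ - 1| := by
        simpa only [Real.one_rpow, Real.norm_eq_abs] using h_ball (h_near.trans_lt hr.2)
    _ ≤ C * r := by gcongr

theorem abs_sub_one_rpow_le_abs_rpow_sub_one {σ s r : ℝ} (hσ : 1 ≤ σ) (hσs : σ ≤ s)
    (hr : 0 ≤ r) : |r - 1| ^ σ ≤ |r ^ s - 1| := by
  rcases le_total r 1 with hr1 | hr1
  · have h_pow : r ^ s ≤ r := by
      simpa using Real.rpow_le_rpow_of_exponent_ge' hr hr1 zero_le_one (hσ.trans hσs)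
    calc |r - 1| ^ σ = (1 - r) ^ σ := by rw [abs_sub_comm, abs_of_nonneg (by linarith)]
      _ ≤ 1 - r := by
          simpa using Real.rpow_le_rpow_of_exponent_ge' (by linarith : 0 ≤ 1 - r) (by linarith)
            zero_le_one hσ
      _ ≤ 1 - r ^ s := by linarith
      _ ≤ |r ^ s - 1| := by rw [abs_sub_comm]; exact le_abs_self _
  · have h_superadd := Real.add_rpow_le_rpow_add (sub_nonneg.2 hr1) zero_le_one hσ
    rw [Real.one_rpow, sub_add_cancel] at h_superadd
    calc |r - 1| ^ σ = (r - 1) ^ σ := by rw [abs_of_nonneg (by linarith)]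
      _ ≤ r ^ σ - 1 := by linarith
      _ ≤ r ^ s - 1 := by gcongr
      _ ≤ |r ^ s - 1| := le_abs_self _

theorem abs_norm_sub_one_eq_norm_sub_or_norm_add (ξ : Esp 1) :
    |‖ξ‖ - 1| = ‖ξ - EuclideanSpace.single 0 1‖ ∨ |‖ξ‖ - 1| = ‖ξ + EuclideanSpace.single 0 1‖ := by
  have h_norm : ∀ x : Esp 1, ‖x‖ = |x 0| := fun x => by
    simp [EuclideanSpace.norm_eq, Real.sqrt_sq_eq_abs]
  simp only [h_norm, PiLp.sub_apply, PiLp.add_apply, PiLp.single_apply, if_true]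
  rcases abs_choice (ξ 0) with h | h
  · left
    rw [h]
  · right
    rw [h, ← abs_neg, neg_sub, sub_neg_eq_add, add_comm]

-- The zeros `±1` of the symbol are simple and its growth at infinity is of order `s`, so it
-- dominates the `σ`-th power of the distance to `{1, -1}` for every `σ` between `1` and `s`.
theorem eLpNorm_two_inv_one_add_abs_norm_rpow_sub_one_div_le {σ s ρ : ℝ} (hσ : 1 ≤ σ)
    (hσs : σ ≤ s) (hρ : 0 < ρ) :
    eLpNorm (fun ξ : Esp 1 => (1 + |‖ξ‖ ^ s - 1| / ρ)⁻¹) 2 volume ≤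
      2 * eLpNorm (fun ξ : Esp 1 => (1 + ‖ξ‖ ^ σ)⁻¹) 2 volume *
        ENNReal.ofReal ρ ^ (1 / (2 * σ)) := by
  let g : Esp 1 → ℝ := fun ξ => (1 + ‖ξ‖ ^ σ / ρ)⁻¹
  let e : Esp 1 := EuclideanSpace.single 0 1
  have hg_nonneg : ∀ ξ, 0 ≤ g ξ := fun ξ => by positivity
  have hg_meas : AEStronglyMeasurable g volume :=
    (by fun_prop : Measurable g).aestronglyMeasurable
  have h_sub := measurePreserving_sub_right (volume : Measure (Esp 1)) e
  have h_add := measurePreserving_add_right (volume : Measure (Esp 1)) e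
  have h_pointwise : ∀ ξ : Esp 1, (1 + |‖ξ‖ ^ s - 1| / ρ)⁻¹ ≤ g (ξ - e) + g (ξ + e) := fun ξ => by
    have h_pow := abs_sub_one_rpow_le_abs_rpow_sub_one hσ hσs (norm_nonneg ξ)
    have h_inv : (1 + |‖ξ‖ ^ s - 1| / ρ)⁻¹ ≤ (1 + |‖ξ‖ - 1| ^ σ / ρ)⁻¹ := by gcongr
    rcases abs_norm_sub_one_eq_norm_sub_or_norm_add ξ with h | h <;> rw [h] at h_inv
    · exact h_inv.trans (le_add_of_nonneg_right (hg_nonneg _))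
    · exact h_inv.trans (le_add_of_nonneg_left (hg_nonneg _))
  calc eLpNorm (fun ξ : Esp 1 => (1 + |‖ξ‖ ^ s - 1| / ρ)⁻¹) 2 volume
      ≤ eLpNorm (fun ξ => g (ξ - e) + g (ξ + e)) 2 volume := by
        refine eLpNorm_mono_real fun ξ => ?_
        rw [Real.norm_of_nonneg (by positivity)]
        exact h_pointwise ξ
    _ ≤ eLpNorm (g ∘ fun ξ => ξ - e) 2 volume + eLpNorm (g ∘ fun ξ => ξ + e) 2 volume :=
        eLpNorm_add_le (hg_meas.comp_measurePreserving h_sub)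
          (hg_meas.comp_measurePreserving h_add) (by norm_num)
    _ = 2 * eLpNorm g 2 volume := by
        rw [eLpNorm_comp_measurePreserving hg_meas h_sub,
          eLpNorm_comp_measurePreserving hg_meas h_add, two_mul]
    _ = _ := by
        rw [eLpNorm_two_inv_one_add_norm_rpow_div volume (by linarith) hρ,
          finrank_euclideanSpace_fin, Nat.cast_one, mul_assoc]

end Symbol

namespace Hs

variable {N : ℕ} {s : ℝ}

theorem memLp_hat (hs : 0 ≤ s) (U : Hs N s) : MemLp U.hat 2 volume := by
  have h_weight_ne : ∀ ξ : Esp N, (((1 + ‖ξ‖ ^ 2) ^ (s / 2) : ℝ) : ℂ) ≠ 0 := fun ξ =>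
    Complex.ofReal_ne_zero.2 (by positivity)
  have h_meas : AEStronglyMeasurable U.hat volume := by
    refine (((continuous_one_add_norm_sq_rpow s).measurable.inv.aestronglyMeasurable).mul
      U.hat_mem.1).congr (Eventually.of_forall fun ξ => ?_)
    simp only [Pi.mul_apply, Pi.inv_apply, inv_mul_cancel_left₀ (h_weight_ne ξ)]
  refine U.hat_mem.of_le h_meas (Eventually.of_forall fun ξ => ?_)
  rw [norm_mul, Complex.norm_real, Real.norm_of_nonneg (by positivity)]
  exact le_mul_of_one_le_left (norm_nonneg _) (one_le_one_add_norm_sq_rpow hs ξ)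

theorem hat_ae_eq_fourier (hs : 0 ≤ s) (U : Hs N s) :
    U.hat =ᵐ[volume] (𝓕 (U.u_mem.toLp U.u) : Lp (α := Esp N) ℂ 2 volume) := by
  refine ae_eq_of_forall_integral_mul_schwartzMap_eq
    ((U.memLp_hat hs).locallyIntegrable (by norm_num))
    ((Lp.memLp (𝓕 (U.u_mem.toLp U.u))).locallyIntegrable (by norm_num)) fun φ => ?_
  rw [← integral_Lp_mul_fourier_eq, ← U.fourier_spec φ]
  refine integral_congr_ae ?_
  filter_upwards [U.u_mem.coeFn_toLp] with x hx
  rw [hx]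
  rfl

theorem eLpNorm_u_eq_eLpNorm_hat (hs : 0 ≤ s) (U : Hs N s) :
    eLpNorm U.u 2 volume = eLpNorm U.hat 2 volume := by
  rw [eLpNorm_congr_ae (U.hat_ae_eq_fourier hs), ← eLpNorm_congr_ae U.u_mem.coeFn_toLp]
  have h_plancherel := Lp.norm_fourier_eq (U.u_mem.toLp U.u)
  rw [Lp.norm_def, Lp.norm_def] at h_plancherel
  exact ((ENNReal.toReal_eq_toReal_iff' (Lp.eLpNorm_ne_top _) (Lp.eLpNorm_ne_top _)).1
    h_plancherel).symm

theorem u_ae_eq_fourierInv (U : Hs N s) (h : Integrable U.hat volume) :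
    U.u =ᵐ[volume] 𝓕⁻ U.hat := by
  refine ae_eq_of_forall_integral_mul_schwartzMap_eq (U.u_mem.locallyIntegrable (by norm_num))
    (continuous_fourierInv_of_integrable h).locallyIntegrable fun φ => ?_
  rw [integral_fourierInv_mul_schwartzMap_eq h, ← U.fourier_spec]
  simp

theorem eLpNorm_top_u_le_eLpNorm_one_hat (hs : 0 ≤ s) (U : Hs N s) :
    eLpNorm U.u ⊤ volume ≤ eLpNorm U.hat 1 volume := by
  by_cases h_top : eLpNorm U.hat 1 volume = ⊤
  · rw [h_top]
    exact le_top
  have h_int : Integrable U.hat volume :=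
    memLp_one_iff_integrable.1 ⟨(U.memLp_hat hs).1, lt_top_iff_ne_top.2 h_top⟩
  rw [eLpNorm_congr_ae (U.u_ae_eq_fourierInv h_int)]
  exact eLpNorm_top_fourierInv_le _

theorem dNorm_eq_eLpNorm_smul (U : Hs N s) :
    dNorm U = eLpNorm ((fun ξ : Esp N => |‖ξ‖ ^ s - 1|) • U.hat) 2 volume :=
  eLpNorm_congr_norm_ae <| Eventually.of_forall fun ξ => by
    simp only [Pi.smul_apply', norm_mul, norm_smul, Complex.norm_real, Real.norm_eq_abs, abs_abs]

theorem aestronglyMeasurable_smul_hat (hs : 0 ≤ s) (U : Hs N s) :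
    AEStronglyMeasurable ((fun ξ : Esp N => |‖ξ‖ ^ s - 1|) • U.hat) volume :=
  (by fun_prop : Measurable fun ξ : Esp N => |‖ξ‖ ^ s - 1|).aestronglyMeasurable.smul
    (U.memLp_hat hs).1

theorem dNorm_ne_top (hs : 0 ≤ s) (U : Hs N s) : dNorm U ≠ ⊤ := by
  rw [U.dNorm_eq_eLpNorm_smul]
  refine (U.hat_mem.of_le (U.aestronglyMeasurable_smul_hat hs)
    (Eventually.of_forall fun ξ => ?_)).eLpNorm_ne_top
  rw [Pi.smul_apply', norm_smul, norm_mul, Complex.norm_real, Real.norm_eq_abs, abs_abs,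
    Real.norm_of_nonneg (by positivity)]
  gcongr
  exact abs_norm_rpow_sub_one_le hs ξ

theorem Nontriv.eLpNorm_ne_zero {U : Hs N s} (hU : U.Nontriv) : eLpNorm U.u 2 volume ≠ 0 := fun h =>
  hU ((eLpNorm_eq_zero_iff U.u_mem.1 (by norm_num)).1 h)

-- The symbol `|ξ|^s - 1` vanishes only on the unit sphere, a null set.
theorem Nontriv.dNorm_ne_zero [NeZero N] (hs : 0 < s) {U : Hs N s} (hU : U.Nontriv) :
    dNorm U ≠ 0 := by
  contrapose hU with h
  rw [U.dNorm_eq_eLpNorm_smul,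
    eLpNorm_eq_zero_iff (U.aestronglyMeasurable_smul_hat hs.le) (by norm_num)] at h
  have h_sphere : ∀ᵐ ξ : Esp N, ξ ∉ Metric.sphere (0 : Esp N) 1 :=
    measure_eq_zero_iff_ae_notMem.1 (Measure.addHaar_sphere _ _ _)
  have h_hat : U.hat =ᵐ[volume] 0 := by
    filter_upwards [h, h_sphere] with ξ hξ hξ_sphere
    rw [Pi.smul_apply', Pi.zero_apply] at hξ
    refine (smul_eq_zero.1 hξ).resolve_left fun h_symbol => hξ_sphere ?_
    rw [abs_eq_zero, sub_eq_zero, ← Real.one_rpow s,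
      Real.rpow_left_inj (norm_nonneg ξ) zero_le_one hs.ne'] at h_symbol
    simpa using h_symbol
  rw [Nontriv, not_not, ← eLpNorm_eq_zero_iff U.u_mem.1 (by norm_num : (2 : ENNReal) ≠ 0),
    U.eLpNorm_u_eq_eLpNorm_hat hs.le, eLpNorm_congr_ae h_hat, eLpNorm_zero]

theorem dNorm_le_of_abs_norm_rpow_sub_one_le (hs : 0 ≤ s) {U : Hs N s} {δ : ℝ}
    (h : ∀ ξ ∈ Function.support U.hat, |‖ξ‖ ^ s - 1| ≤ δ) :
    dNorm U ≤ ENNReal.ofReal δ * eLpNorm U.u 2 volume := by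
  rw [U.dNorm_eq_eLpNorm_smul, U.eLpNorm_u_eq_eLpNorm_hat hs]
  refine eLpNorm_le_mul_eLpNorm_of_ae_le_mul (Eventually.of_forall fun ξ => ?_) 2
  rw [Pi.smul_apply', norm_smul, Real.norm_eq_abs, abs_abs]
  by_cases hξ : U.hat ξ = 0
  · simp [hξ]
  · gcongr
    exact h ξ hξ

theorem le_dNorm_of_le_abs_norm_rpow_sub_one (hs : 0 ≤ s) {U : Hs N s} {δ : ℝ} (hδ : 0 ≤ δ)
    (h : ∀ ξ ∈ Function.support U.hat, δ ≤ |‖ξ‖ ^ s - 1|) :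
    ENNReal.ofReal δ * eLpNorm U.u 2 volume ≤ dNorm U := by
  rw [U.dNorm_eq_eLpNorm_smul, U.eLpNorm_u_eq_eLpNorm_hat hs, ← Real.enorm_of_nonneg hδ,
    ← eLpNorm_const_smul]
  refine eLpNorm_mono_ae (Eventually.of_forall fun ξ => ?_)
  rw [Pi.smul_apply, Pi.smul_apply', norm_smul, norm_smul, Real.norm_of_nonneg hδ,
    Real.norm_eq_abs, abs_abs]
  by_cases hξ : U.hat ξ = 0
  · simp [hξ]
  · gcongr
    exact h ξ hξ

theorem eLpNorm_div_le_Qquot {U : Hs N s} (hU : U.Nontriv) {p κ δ : ℝ} (hδ : 0 < δ)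
    (hD : dNorm U ^ (1 - κ) ≤ (ENNReal.ofReal δ * eLpNorm U.u 2 volume) ^ (1 - κ)) :
    eLpNorm U.u (ENNReal.ofReal p) volume / (ENNReal.ofReal (δ ^ (1 - κ)) * eLpNorm U.u 2 volume) ≤
      Qquot p κ U := by
  have hA_top := U.u_mem.eLpNorm_ne_top
  rw [Qquot]
  refine ENNReal.div_le_div_left ?_ _
  calc eLpNorm U.u 2 volume ^ κ * dNorm U ^ (1 - κ)
      ≤ eLpNorm U.u 2 volume ^ κ * (ENNReal.ofReal δ * eLpNorm U.u 2 volume) ^ (1 - κ) := by gcongr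
    _ = ENNReal.ofReal (δ ^ (1 - κ)) *
          (eLpNorm U.u 2 volume ^ κ * eLpNorm U.u 2 volume ^ (1 - κ)) := by
        rw [ENNReal.mul_rpow_of_ne_top ENNReal.ofReal_ne_top hA_top,
          ENNReal.ofReal_rpow_of_pos hδ, mul_left_comm]
    _ = ENNReal.ofReal (δ ^ (1 - κ)) * eLpNorm U.u 2 volume := by
        rw [← ENNReal.rpow_add _ _ hU.eLpNorm_ne_zero hA_top, add_sub_cancel, ENNReal.rpow_one]

/-- The element of `H^s` with a prescribed Fourier transform `h`; its `u` is the inverse Fourier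
transform of `h` in `L²`. -/
def ofHat (h : Esp N → ℂ) (hh : MemLp h 2 volume)
    (hm : MemLp (fun ξ : Esp N => (((1 + ‖ξ‖ ^ 2) ^ (s / 2) : ℝ) : ℂ) * h ξ) 2 volume) :
    Hs N s where
  u := (𝓕⁻ (hh.toLp h) : Lp (α := Esp N) ℂ 2 volume)
  hat := h
  u_mem := Lp.memLp _
  hat_mem := hm
  fourier_spec φ := by
    refine (integral_Lp_mul_fourier_eq _ φ).trans (integral_congr_ae ?_)
    rw [FourierTransform.fourier_fourierInv_eq]
    filter_upwards [hh.coeFn_toLp] with ξ hξ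
    rw [hξ]

/-- The test function whose Fourier transform is the indicator function of the closed ball with
center `a` and radius `r`. -/
def bump (s : ℝ) (a : Esp N) (r : ℝ) : Hs N s :=
  ofHat ((Metric.closedBall a r).indicator fun _ => 1)
    (memLp_indicator_of_isCompact (isCompact_closedBall a r) continuousOn_const 2) <| by
      refine (memLp_indicator_of_isCompact (isCompact_closedBall a r)
        (continuous_one_add_norm_sq_rpow s).continuousOn 2).ae_eq
        (Eventually.of_forall fun ξ => ?_)
      by_cases hξ : ξ ∈ Metric.closedBall a r <;> simp [hξ]

theorem support_hat_bump_subset (a : Esp N) (r : ℝ) :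
    Function.support (bump s a r).hat ⊆ Metric.closedBall a r :=
  Set.support_indicator_subset

theorem eLpNorm_two_bump (hs : 0 ≤ s) (a : Esp N) (r : ℝ) :
    eLpNorm (bump s a r).u 2 volume =
      ENNReal.ofReal (volume.real (Metric.closedBall a r) ^ (1 / 2 : ℝ)) := by
  rw [eLpNorm_u_eq_eLpNorm_hat hs]
  change eLpNorm ((Metric.closedBall a r).indicator fun _ => (1 : ℂ)) 2 volume = _
  rw [eLpNorm_indicator_const Metric.isClosed_closedBall.measurableSet (by norm_num)
      (by norm_num), enorm_one, one_mul, ← ENNReal.ofReal_rpow_of_nonneg measureReal_nonneg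
      (by norm_num), ofReal_measureReal measure_closedBall_lt_top.ne, ENNReal.toReal_ofNat]

theorem nontriv_bump (hs : 0 ≤ s) (a : Esp N) {r : ℝ} (hr : 0 < r) : (bump s a r).Nontriv := by
  intro h_zero
  have h_norm := eLpNorm_congr_ae (p := 2) h_zero
  rw [eLpNorm_two_bump hs, eLpNorm_zero, ENNReal.ofReal_eq_zero, ← not_lt] at h_norm
  exact h_norm (Real.rpow_pos_of_pos (measureReal_closedBall_pos volume a hr) _)

theorem le_eLpNorm_bump (a : Esp N) {r p : ℝ} (hr : 0 < r) (hp : 0 < p) :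
    ENNReal.ofReal (volume.real (Metric.closedBall a r) / 2 *
        volume.real (Metric.closedBall (0 : Esp N) (6 * r)⁻¹) ^ p⁻¹) ≤
      eLpNorm (bump s a r).u (ENNReal.ofReal p) volume := by
  set V := volume.real (Metric.closedBall a r)
  have hV : 0 ≤ V / 2 := by positivity
  have h_dual : MeasurableSet (Metric.closedBall (0 : Esp N) (6 * r)⁻¹) :=
    Metric.isClosed_closedBall.measurableSet
  have h_int : Integrable (bump s a r).hat volume :=
    memLp_one_iff_integrable.1
      (memLp_indicator_of_isCompact (isCompact_closedBall a r) continuousOn_const 1)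
  calc ENNReal.ofReal (V / 2 * volume.real (Metric.closedBall (0 : Esp N) (6 * r)⁻¹) ^ p⁻¹)
      = eLpNorm ((Metric.closedBall (0 : Esp N) (6 * r)⁻¹).indicator fun _ => V / 2)
          (ENNReal.ofReal p) volume := by
        rw [eLpNorm_indicator_const h_dual (by simpa using hp) ENNReal.ofReal_ne_top,
          ENNReal.toReal_ofReal hp.le, Real.enorm_of_nonneg hV, ENNReal.ofReal_mul hV,
          ← ENNReal.ofReal_rpow_of_nonneg measureReal_nonneg (by positivity),
          ofReal_measureReal measure_closedBall_lt_top.ne, one_div]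
    _ ≤ eLpNorm (𝓕⁻ (bump s a r).hat) (ENNReal.ofReal p) volume := by
        refine eLpNorm_mono fun x => ?_
        by_cases hx : x ∈ Metric.closedBall (0 : Esp N) (6 * r)⁻¹
        · rw [Set.indicator_of_mem hx, Real.norm_of_nonneg hV]
          refine half_measureReal_le_norm_fourierInv_indicator (a := a)
            Metric.isClosed_closedBall.measurableSet measure_closedBall_lt_top.ne
            fun v hv => ?_
          calc |inner ℝ (v - a) x| ≤ ‖v - a‖ * ‖x‖ := abs_real_inner_le_norm _ _
            _ ≤ r * (6 * r)⁻¹ := by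
                gcongr
                · exact mem_closedBall_iff_norm.1 hv
                · exact mem_closedBall_zero_iff.1 hx
            _ = 1 / 6 := by field_simp
        · rw [Set.indicator_of_notMem hx, norm_zero]
          exact norm_nonneg _
    _ = eLpNorm (bump s a r).u (ENNReal.ofReal p) volume :=
        (eLpNorm_congr_ae ((bump s a r).u_ae_eq_fourierInv h_int)).symm

theorem exists_mul_eLpNorm_two_bump_le (N : ℕ) (hs : 0 ≤ s) {p : ℝ} (hp : 0 < p) :
    ∃ c > 0, ∀ (a : Esp N) (r : ℝ), 0 < r →
      ENNReal.ofReal (c * r ^ (N * (1 / 2 - 1 / p))) * eLpNorm (bump s a r).u 2 volume ≤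
        eLpNorm (bump s a r).u (ENNReal.ofReal p) volume := by
  set v := volume.real (Metric.closedBall (0 : Esp N) 1)
  have hv : 0 < v := measureReal_closedBall_pos volume 0 one_pos
  refine ⟨v ^ (1 / 2 : ℝ) / 2 * (v / 6 ^ N) ^ p⁻¹, by positivity, fun a r hr => ?_⟩
  refine le_of_eq_of_le ?_ (le_eLpNorm_bump a hr hp)
  rw [eLpNorm_two_bump hs, ← ENNReal.ofReal_mul (by positivity),
    Measure.addHaar_real_closedBall' _ a hr.le,
    Measure.addHaar_real_closedBall' _ 0 (by positivity : 0 ≤ (6 * r)⁻¹),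
    finrank_euclideanSpace_fin]
  congr 1
  have h_dual : (6 * r)⁻¹ ^ N * v = (v / 6 ^ N) * (r ^ N)⁻¹ := by
    rw [mul_inv, mul_pow, inv_pow, inv_pow]
    ring
  have h_exponent : r ^ (N * (1 / 2 - 1 / p)) = (r ^ N) ^ (1 / 2 : ℝ) * ((r ^ N)⁻¹) ^ p⁻¹ := by
    rw [Real.inv_rpow (by positivity), ← Real.rpow_neg (by positivity),
      ← Real.rpow_add (by positivity), ← Real.rpow_natCast_mul hr.le, ← sub_eq_add_neg, one_div p]
  have h_sqrt : ∀ {y : ℝ}, 0 ≤ y → y ^ (1 / 2 : ℝ) * y ^ (1 / 2 : ℝ) = y := fun hy => by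
    rw [← Real.sqrt_eq_rpow, Real.mul_self_sqrt hy]
  rw [h_dual, h_exponent, Real.mul_rpow (by positivity) (by positivity),
    Real.mul_rpow (by positivity) (by positivity)]
  calc _ = (r ^ N) ^ (1 / 2 : ℝ) * (r ^ N) ^ (1 / 2 : ℝ) * (v ^ (1 / 2 : ℝ) * v ^ (1 / 2 : ℝ)) / 2 *
        ((v / 6 ^ N) ^ p⁻¹ * ((r ^ N)⁻¹) ^ p⁻¹) := by ring
    _ = _ := by rw [h_sqrt (by positivity), h_sqrt hv.le]

theorem exists_le_Qquot_bump (N : ℕ) (hs : 0 ≤ s) {p : ℝ} (hp : 0 < p) :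
    ∃ c > 0, ∀ (κ : ℝ) (a : Esp N) (r δ : ℝ), 0 < r → 0 < δ →
      dNorm (bump s a r) ^ (1 - κ) ≤
        (ENNReal.ofReal δ * eLpNorm (bump s a r).u 2 volume) ^ (1 - κ) →
      ENNReal.ofReal (c * r ^ (N * (1 / 2 - 1 / p)) / δ ^ (1 - κ)) ≤ Qquot p κ (bump s a r) := by
  obtain ⟨c, hc, h_lower⟩ := exists_mul_eLpNorm_two_bump_le N hs hp
  refine ⟨c, hc, fun κ a r δ hr hδ hD => ?_⟩
  have h_nontriv := nontriv_bump hs a hr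
  refine le_trans ?_ (eLpNorm_div_le_Qquot h_nontriv hδ hD)
  rw [ENNReal.ofReal_div_of_pos (by positivity),
    ← ENNReal.mul_div_mul_right _ _ h_nontriv.eLpNorm_ne_zero (bump s a r).u_mem.eLpNorm_ne_top]
  exact ENNReal.div_le_div_right (h_lower a r hr) _

theorem iSup_Qquot_eq_top_of_tendsto (hs : 0 ≤ s) {p κ m C : ℝ} (hp : 0 < p) (hC : 0 < C)
    {l : Filter ℝ} [l.NeBot] (hl : ∀ᶠ r in l, 0 < r) (a : ℝ → Esp N)
    (hD : ∀ᶠ r in l, dNorm (bump s (a r) r) ^ (1 - κ) ≤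
      (ENNReal.ofReal (C * r ^ m) * eLpNorm (bump s (a r) r).u 2 volume) ^ (1 - κ))
    (hlim : Tendsto (fun r : ℝ => r ^ (N * (1 / 2 - 1 / p) - m * (1 - κ))) l atTop) :
    ⨆ (U : Hs N s) (_ : U.Nontriv), Qquot p κ U = ⊤ := by
  obtain ⟨c, hc, h_lower⟩ := exists_le_Qquot_bump N hs hp
  refine ENNReal.eq_top_of_forall_nnreal_le fun K => ?_
  have h_large := (hlim.const_mul_atTop (by positivity : 0 < c / C ^ (1 - κ))).eventually_ge_atTop K
  obtain ⟨r, hr, hDr, hKr⟩ := (hl.and (hD.and h_large)).exists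
  have h_quot : c * r ^ (N * (1 / 2 - 1 / p)) / (C * r ^ m) ^ (1 - κ) =
      c / C ^ (1 - κ) * r ^ (N * (1 / 2 - 1 / p) - m * (1 - κ)) := by
    rw [Real.mul_rpow hC.le (by positivity), ← Real.rpow_mul hr.le, Real.rpow_sub hr]
    field_simp
  calc (K : ENNReal) ≤ ENNReal.ofReal (c * r ^ (N * (1 / 2 - 1 / p)) / (C * r ^ m) ^ (1 - κ)) := by
        rw [h_quot, ← ENNReal.ofReal_coe_nnreal]
        exact ENNReal.ofReal_le_ofReal hKr
    _ ≤ Qquot p κ (bump s (a r) r) := h_lower κ (a r) r _ hr (by positivity) hDr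
    _ ≤ _ := le_iSup₂ (f := fun (U : Hs N s) (_ : U.Nontriv) => Qquot p κ U) _
        (nontriv_bump hs (a r) hr)

-- Balls far out on a ray: there `|ξ|^s - 1` is comparable to `r^s` from both sides, so that the
-- estimate works whatever the sign of `1 - κ`.
theorem iSup_Qquot_eq_top_of_mul_lt [NeZero N] (hs : 0 < s) {p κ : ℝ} (hp : 0 < p)
    (h : s * (1 - κ) < N * (1 / 2 - 1 / p)) :
    ⨆ (U : Hs N s) (_ : U.Nontriv), Qquot p κ U = ⊤ := by
  obtain ⟨e, he⟩ := exists_norm_eq (Esp N) zero_le_one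
  have h_symbol : ∀ᶠ r : ℝ in atTop, ∀ ξ ∈ Function.support (bump s ((2 * r) • e) r).hat,
      |‖ξ‖ ^ s - 1| ∈ Set.Icc (1 / 2 * r ^ s) (3 ^ s * r ^ s) := by
    filter_upwards [(tendsto_rpow_atTop hs).eventually_ge_atTop 2, eventually_gt_atTop 0]
      with r hrs hr ξ hξ
    have h_dist := mem_closedBall_iff_norm.1 (support_hat_bump_subset _ _ hξ)
    have h_center : ‖(2 * r) • e‖ = 2 * r := by
      rw [norm_smul, he, mul_one, Real.norm_of_nonneg (by positivity)]
    have h_abs := abs_le.1 ((abs_norm_sub_norm_le ξ ((2 * r) • e)).trans h_dist)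
    rw [h_center] at h_abs
    exact abs_norm_rpow_sub_one_mem_Icc_of_le_norm hs hrs hr.le (by linarith) (by linarith)
  have h_lim := tendsto_rpow_atTop (sub_pos.2 h)
  rcases le_total κ 1 with hκ | hκ
  · refine iSup_Qquot_eq_top_of_tendsto hs.le hp (by positivity : 0 < (3 : ℝ) ^ s)
      (eventually_gt_atTop 0) (fun r => (2 * r) • e) ?_ h_lim
    filter_upwards [h_symbol] with r hr
    exact ENNReal.rpow_le_rpow
      (dNorm_le_of_abs_norm_rpow_sub_one_le hs.le fun ξ hξ => (hr ξ hξ).2) (sub_nonneg.2 hκ)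
  · refine iSup_Qquot_eq_top_of_tendsto hs.le hp (by norm_num : (0 : ℝ) < 1 / 2)
      (eventually_gt_atTop 0) (fun r => (2 * r) • e) ?_ h_lim
    filter_upwards [h_symbol, eventually_gt_atTop 0] with r hr hr_pos
    rw [← neg_sub κ 1, ENNReal.rpow_neg, ENNReal.rpow_neg, ENNReal.inv_le_inv]
    exact ENNReal.rpow_le_rpow (le_dNorm_of_le_abs_norm_rpow_sub_one hs.le (by positivity)
      fun ξ hξ => (hr ξ hξ).1) (sub_nonneg.2 hκ)

theorem iSup_Qquot_eq_top_of_lt_one_sub [NeZero N] (hs : 0 ≤ s) {p κ : ℝ} (hp : 0 < p)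
    (hκ : κ ≤ 1) (h : N * (1 / 2 - 1 / p) < 1 - κ) :
    ⨆ (U : Hs N s) (_ : U.Nontriv), Qquot p κ U = ⊤ := by
  obtain ⟨e, he⟩ := exists_norm_eq (Esp N) zero_le_one
  obtain ⟨C, hC, h_symbol⟩ := exists_abs_norm_rpow_sub_one_le_mul s he
  refine iSup_Qquot_eq_top_of_tendsto (m := 1) (l := 𝓝[>] 0) hs hp hC
    eventually_mem_nhdsWithin (fun _ => e) ?_
    (tendsto_rpow_neg_nhdsGT_zero (by linarith))
  filter_upwards [h_symbol] with r hr
  rw [Real.rpow_one]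
  exact ENNReal.rpow_le_rpow (dNorm_le_of_abs_norm_rpow_sub_one_le hs fun ξ hξ =>
    hr ξ (support_hat_bump_subset _ _ hξ)) (sub_nonneg.2 hκ)

theorem eLpNorm_one_hat_le {σ : ℝ} (hσ : 1 ≤ σ) (hσs : σ ≤ s) {U : Hs 1 s} (hU : U.Nontriv) :
    eLpNorm U.hat 1 volume ≤
      2 * (2 * eLpNorm (fun ξ : Esp 1 => (1 + ‖ξ‖ ^ σ)⁻¹) 2 volume) *
        (eLpNorm U.u 2 volume ^ (1 - 1 / (2 * σ)) * dNorm U ^ (1 / (2 * σ))) := by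
  have hs : 0 < s := by linarith
  have hA_zero := hU.eLpNorm_ne_zero
  have hD_zero := hU.dNorm_ne_zero hs
  have hD_top := U.dNorm_ne_top hs.le
  rw [U.eLpNorm_u_eq_eLpNorm_hat hs.le] at hA_zero ⊢
  rw [U.dNorm_eq_eLpNorm_smul] at hD_zero hD_top ⊢
  exact eLpNorm_one_le_of_eLpNorm_inv_one_add_div_le (by fun_prop) (fun _ => abs_nonneg _)
    (fun ρ hρ => eLpNorm_two_inv_one_add_abs_norm_rpow_sub_one_div_le hσ hσs hρ)
    (U.memLp_hat hs.le).1 hA_zero (U.memLp_hat hs.le).eLpNorm_ne_top hD_zero hD_top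

theorem Qquot_le {σ p κ : ℝ} (hσ : 1 ≤ σ) (hσs : σ ≤ s) (hp : 2 < p)
    (hκ : 1 - κ = 1 / (2 * σ) * (1 - 2 / p)) {U : Hs 1 s} (hU : U.Nontriv) :
    Qquot p κ U ≤
      (2 * (2 * eLpNorm (fun ξ : Esp 1 => (1 + ‖ξ‖ ^ σ)⁻¹) 2 volume)) ^ (1 - 2 / p) := by
  have hs : 0 ≤ s := by linarith
  have hp_exponent : 0 ≤ 1 - 2 / p := sub_nonneg.2 ((div_le_one (by linarith)).2 hp.le)
  have hκ_exponent : 2 / p + (1 - 1 / (2 * σ)) * (1 - 2 / p) = κ := by linear_combination hκ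
  have h_interp := eLpNorm_le_eLpNorm_rpow_mul_eLpNorm_top_rpow U.u_mem.1 two_pos hp.le
  have h_sup := (U.eLpNorm_top_u_le_eLpNorm_one_hat hs).trans (eLpNorm_one_hat_le hσ hσs hU)
  rw [ENNReal.ofReal_ofNat] at h_interp
  rw [Qquot]
  set A := eLpNorm U.u 2 volume
  set K := 2 * (2 * eLpNorm (fun ξ : Esp 1 => (1 + ‖ξ‖ ^ σ)⁻¹) 2 volume)
  refine ENNReal.div_le_of_le_mul ?_
  calc eLpNorm U.u (ENNReal.ofReal p) volume
      ≤ A ^ (2 / p) * (K * (A ^ (1 - 1 / (2 * σ)) * dNorm U ^ (1 / (2 * σ)))) ^ (1 - 2 / p) :=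
        h_interp.trans (by gcongr)
    _ = K ^ (1 - 2 / p) *
          (A ^ (2 / p) * A ^ ((1 - 1 / (2 * σ)) * (1 - 2 / p)) * dNorm U ^ (1 - κ)) := by
        rw [ENNReal.mul_rpow_of_nonneg K _ hp_exponent,
          ENNReal.mul_rpow_of_nonneg (A ^ _) _ hp_exponent, ← ENNReal.rpow_mul,
          ← ENNReal.rpow_mul, hκ]
        ring
    _ = K ^ (1 - 2 / p) * (A ^ κ * dNorm U ^ (1 - κ)) := by
        rw [← ENNReal.rpow_add _ _ hU.eLpNorm_ne_zero U.u_mem.eLpNorm_ne_top, hκ_exponent]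

theorem iSup_Qquot_lt_top {σ p κ : ℝ} (hσ : 1 ≤ σ) (hσs : σ ≤ s) (hp : 2 < p)
    (hκ : 1 - κ = 1 / (2 * σ) * (1 - 2 / p)) :
    ⨆ (U : Hs 1 s) (_ : U.Nontriv), Qquot p κ U < ⊤ := by
  have h_memLp : MemLp (fun ξ : Esp 1 => (1 + ‖ξ‖ ^ σ)⁻¹) 2 volume :=
    memLp_two_inv_one_add_norm_rpow volume (by rw [finrank_euclideanSpace_fin]; norm_num; linarith)
  have hp_exponent : 0 ≤ 1 - 2 / p := sub_nonneg.2 ((div_le_one (by linarith)).2 hp.le)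
  calc ⨆ (U : Hs 1 s) (_ : U.Nontriv), Qquot p κ U
      ≤ (2 * (2 * eLpNorm (fun ξ : Esp 1 => (1 + ‖ξ‖ ^ σ)⁻¹) 2 volume)) ^ (1 - 2 / p) :=
        iSup₂_le fun _ hU => Qquot_le hσ hσs hp hκ hU
    _ < ⊤ := by
        refine ENNReal.rpow_lt_top_of_nonneg hp_exponent ?_
        exact ENNReal.mul_ne_top (by simp) (ENNReal.mul_ne_top (by simp) h_memLp.eLpNorm_ne_top)

end Hs

theorem stmt1_general (s p κ : ℝ) (hs : 0 < s) (hp : 2 < p) :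
    (⨆ (U : Hs 1 s) (_ : U.Nontriv), Qquot p κ U) < ⊤ ↔
      (1 / (2 * s) ≤ (1 - κ) * p / (p - 2) ∧ (1 - κ) * p / (p - 2) ≤ 1 / 2) := by
  have hp_pos : 0 < p := by linarith
  have hp_two : 0 < p - 2 := by linarith
  set x := (1 - κ) * p / (p - 2) with hx
  have hy : 0 < 1 - 2 / p := sub_pos.2 ((div_lt_one hp_pos).2 hp)
  have hκ : 1 - κ = x * (1 - 2 / p) := by
    rw [hx]
    field_simp
  have h_half : ((1 : ℕ) : ℝ) * (1 / 2 - 1 / p) = 1 / 2 * (1 - 2 / p) := by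
    push_cast
    ring
  refine ⟨fun h => ⟨?_, ?_⟩, fun ⟨h_lower, h_upper⟩ => ?_⟩
  · by_contra! hxs
    refine h.ne (Hs.iSup_Qquot_eq_top_of_mul_lt hs hp_pos ?_)
    rw [h_half, hκ, ← mul_assoc]
    gcongr
    rwa [lt_div_iff₀' (by positivity), mul_assoc, ← lt_div_iff₀' two_pos] at hxs
  · by_contra! hx_half
    have h_lt : ((1 : ℕ) : ℝ) * (1 / 2 - 1 / p) < 1 - κ := by
      rw [h_half, hκ]
      gcongr
    have hκ_le : κ ≤ 1 := by nlinarith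
    exact h.ne (Hs.iSup_Qquot_eq_top_of_lt_one_sub hs.le hp_pos hκ_le h_lt)
  · have hx_pos : 0 < x := lt_of_lt_of_le (by positivity) h_lower
    refine Hs.iSup_Qquot_lt_top (σ := 1 / (2 * x)) ?_ ?_ hp ?_
    · rw [le_div_iff₀ (by positivity)]
      linarith
    · rw [div_le_iff₀ (by positivity)] at h_lower ⊢
      linarith
    · rw [hκ]
      field_simp

/-- For `N = 1`, `Q_κ` is bounded on `H^s(ℝ) \ {0}` if and only if
`1/(2s) ≤ (1-κ)p/(p-2) ≤ 1/2`. -/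
theorem stmt1 (s p κ : ℝ) (hs : 0 < s) (hp : 2 < p) (hκ0 : 0 < κ) (hκ1 : κ < 1) :
    (⨆ (U : Hs 1 s) (_ : U.Nontriv), Qquot p κ U) < ⊤ ↔
      (1 / (2 * s) ≤ (1 - κ) * p / (p - 2) ∧ (1 - κ) * p / (p - 2) ≤ 1 / 2) :=
  stmt1_general s p κ hs hp

end
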